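/- arXiv:1012.5268 — 2 statements merged into one kernel-verified Lean document; each statement's English description precedes it below -/
import Mathlib

section
/- For 0 ≤ k ≤ n there exists a (necessarily unique) real polynomial P_{k,n} in two variables of total degree n such that P_{k,n}(x+y, xy) = (2 a_w^{1/2})^{−1/2} (p_{n+1}(x) p_k(y) − p_{n+1}(y) p_k(x)) / (x − y) for all x ≠ y. These polynomials satisfy ∫_Ω P_{k,n}(u,v) P_{j,m}(u,v) W_{1/2}(u,v) du dv = δ_{k,j} δ_{n,m} for all 0 ≤ k ≤ n, 0 ≤ j ≤ m; in particular, for each n, {P_{k,n} : 0 ≤ k ≤ n} is an orthonormal basis of V_n(W_{1/2}). -/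
open MeasureTheory Real Set Filter
open scoped ENNReal

noncomputable section

/-- The parabolic-type domain `Ω`, the image of the triangle `-1 < x < y < 1`
under `(x, y) ↦ (x + y, x y)`. -/
def omegaDom : Set (ℝ × ℝ) :=
  {q | ∃ x y : ℝ, -1 < x ∧ x < y ∧ y < 1 ∧ q = (x + y, x * y)}

/-- The square `[-1,1]²`. -/
def sqDom : Set (ℝ × ℝ) := Icc (-1 : ℝ) 1 ×ˢ Icc (-1 : ℝ) 1

/-- The open triangle `-1 < x < y < 1`. -/
def triDom : Set (ℝ × ℝ) := {q | -1 < q.1 ∧ q.1 < q.2 ∧ q.2 < 1}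

/-- The smaller root `x(u,v)` of `t² - u t + v = 0`. -/
def xRoot (q : ℝ × ℝ) : ℝ := (q.1 - Real.sqrt (q.1 ^ 2 - 4 * q.2)) / 2

/-- The larger root `y(u,v)` of `t² - u t + v = 0`. -/
def yRoot (q : ℝ × ℝ) : ℝ := (q.1 + Real.sqrt (q.1 ^ 2 - 4 * q.2)) / 2

/-- Evaluation of a two-variable polynomial at a point of `ℝ²`. -/
def evalP (P : MvPolynomial (Fin 2) ℝ) (q : ℝ × ℝ) : ℝ :=
  MvPolynomial.eval ![q.1, q.2] P

/-- The space `V_n(W)` of orthogonal polynomials of degree `n` for the weight `W`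
on the domain `D`: polynomials of exact total degree `n` orthogonal to all
polynomials of lower degree. -/
def Vpoly (D : Set (ℝ × ℝ)) (W : ℝ × ℝ → ℝ) (n : ℕ) : Set (MvPolynomial (Fin 2) ℝ) :=
  {P | P.totalDegree = n ∧ ∀ Q : MvPolynomial (Fin 2) ℝ, Q.totalDegree < n →
    (∫ q in D, evalP P q * evalP Q q * W q) = 0}

/-- `Q 0, …, Q n` is an orthonormal basis of `V_n(W)` on `D`. -/
def isONBVn (D : Set (ℝ × ℝ)) (W : ℝ × ℝ → ℝ) (n : ℕ)
    (Q : ℕ → MvPolynomial (Fin 2) ℝ) : Prop :=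
  (∀ k, k ≤ n → Q k ∈ Vpoly D W n) ∧
  (∀ k, k ≤ n → ∀ j, j ≤ n →
    (∫ q in D, evalP (Q k) q * evalP (Q j) q * W q) = if k = j then 1 else 0) ∧
  (∀ R ∈ Vpoly D W n, R ∈ Submodule.span ℝ (Q '' Set.Iic n))

/-- `K` is the reproducing kernel of `Π_n²` in `L²(W)` on the domain `D`:
it is a polynomial function, for each fixed `x ∈ D` it is a polynomial of total
degree `≤ n` in the second variable, and it reproduces every polynomial of total
degree `≤ n`. -/
def IsRK (D : Set (ℝ × ℝ)) (W : ℝ × ℝ → ℝ) (n : ℕ) (K : ℝ × ℝ → ℝ × ℝ → ℝ) : Prop :=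
  (∃ KP : MvPolynomial (Fin 4) ℝ,
    ∀ x y : ℝ × ℝ, K x y = MvPolynomial.eval ![x.1, x.2, y.1, y.2] KP) ∧
  (∀ x ∈ D, ∃ P : MvPolynomial (Fin 2) ℝ, P.totalDegree ≤ n ∧ ∀ y, K x y = evalP P y) ∧
  (∀ P : MvPolynomial (Fin 2) ℝ, P.totalDegree ≤ n →
    ∀ x ∈ D, (∫ y in D, K x y * evalP P y * W y) = evalP P x)

/-- `p` is the sequence of orthonormal polynomials with respect to the weight `w`
on `[-1,1]`: `p n` has degree exactly `n`, positive leading coefficient, and the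
`p n` are orthonormal in `L²(w)`. -/
def IsONPS (w : ℝ → ℝ) (p : ℕ → Polynomial ℝ) : Prop :=
  (∀ n, (p n).natDegree = n) ∧ (∀ n, 0 < (p n).leadingCoeff) ∧
  (∀ n m, (∫ x in Icc (-1:ℝ) 1, (p n).eval x * (p m).eval x * w x)
    = if n = m then 1 else 0)

/-- The Christoffel–Darboux kernel `k_n(x,y) = ∑_{j=0}^n p_j(x) p_j(y)`. -/
def CDK (p : ℕ → Polynomial ℝ) (n : ℕ) (x y : ℝ) : ℝ :=
  ∑ j ∈ Finset.range (n + 1), (p j).eval x * (p j).eval y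

/-- The Jacobi factor `J_{a,b}(x) = (1-x)^a (1+x)^b`. -/
def Jw (a b : ℝ) (x : ℝ) : ℝ := (1 - x) ^ a * (1 + x) ^ b

/-- The factor `J*_{a,b}(u,v) = (1-u+v)^a (1+u+v)^b` on `Ω`. -/
def JstarW (a b : ℝ) (q : ℝ × ℝ) : ℝ := (1 - q.1 + q.2) ^ a * (1 + q.1 + q.2) ^ b

/-- Modulus of continuity of `ψ` on `[-1,1]`. -/
def modCont (ψ : ℝ → ℝ) (t : ℝ) : ℝ :=
  sSup {d : ℝ | ∃ x ∈ Icc (-1:ℝ) 1, ∃ y ∈ Icc (-1:ℝ) 1, |x - y| ≤ t ∧ d = |ψ x - ψ y|}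

/-- The generalized Jacobi class `GJ`. -/
def IsGJ (w : ℝ → ℝ) : Prop :=
  ∃ (r : ℕ) (ψ : ℝ → ℝ) (γ₀ γ₁ : ℝ) (γs xs : Fin r → ℝ),
    -1 < γ₀ ∧ -1 < γ₁ ∧ (∀ i, -1 < γs i) ∧
    StrictMono xs ∧ (∀ i, xs i ∈ Ioo (-1:ℝ) 1) ∧
    ContinuousOn ψ (Icc (-1:ℝ) 1) ∧ (∀ x ∈ Icc (-1:ℝ) 1, 0 < ψ x) ∧
    IntegrableOn (fun t => modCont ψ t / t) (Ioc (0:ℝ) 1) ∧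
    (∀ x : ℝ, |x| ≤ 1 → w x = ψ x * (1 - x) ^ γ₀ * (1 + x) ^ γ₁ * ∏ i, |x - xs i| ^ γs i) ∧
    (∀ x : ℝ, 1 < |x| → w x = 0)

/-- The `L^p`-norm `‖f‖_{w,e}` on `[-1,1]` (as an extended nonnegative real). -/
def lpnormI (w : ℝ → ℝ) (e : ℝ) (f : ℝ → ℝ) : ℝ≥0∞ :=
  (∫⁻ x in Icc (-1:ℝ) 1, ENNReal.ofReal (|f x| ^ e * w x)) ^ (1 / e)

/-- The `L^p`-norm `‖f‖_{W,e}` on a planar domain `D` (as an extended nonnegative real). -/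
def lpnormD (D : Set (ℝ × ℝ)) (W : ℝ × ℝ → ℝ) (e : ℝ) (f : ℝ × ℝ → ℝ) : ℝ≥0∞ :=
  (∫⁻ q in D, ENNReal.ofReal (|f q| ^ e * W q)) ^ (1 / e)

/-- The operator `s_n^{i,j}(w; f, x)` built from the Christoffel–Darboux kernel of the
orthonormal polynomials `pij` of the weight `J_{i,j} w`. -/
def snOp (w : ℝ → ℝ) (pij : ℕ → Polynomial ℝ) (i j : ℝ) (n : ℕ) (f : ℝ → ℝ) (x : ℝ) : ℝ :=
  Jw (i/2) (j/2) x * ∫ y in Icc (-1:ℝ) 1, f y * CDK pij n x y * Jw (i/2) (j/2) y * w y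

/-- Substitution `(x, y) ↦ (2 x y, x² + y² - 1)` on two-variable polynomials. -/
def quadSub (P : MvPolynomial (Fin 2) ℝ) : MvPolynomial (Fin 2) ℝ :=
  MvPolynomial.aeval
    ![2 * MvPolynomial.X 0 * MvPolynomial.X 1,
      MvPolynomial.X 0 ^ 2 + MvPolynomial.X 1 ^ 2 - 1] P

/-- A one-variable polynomial viewed as a polynomial in the first variable. -/
def polyX (q : Polynomial ℝ) : MvPolynomial (Fin 2) ℝ :=
  Polynomial.aeval (MvPolynomial.X 0) q

/-- A one-variable polynomial viewed as a polynomial in the second variable. -/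
def polyY (q : Polynomial ℝ) : MvPolynomial (Fin 2) ℝ :=
  Polynomial.aeval (MvPolynomial.X 1) q

/-!
Since `P_{k,n}(x + y, x * y)` is, up to normalisation, the Bézoutian of `p_{n+1}` and `p_k`, and
`u² - 4v = (x - y)²`, the factor `√(u² - 4v)` of the weight and the Jacobian of
`(x, y) ↦ (x + y, x * y)` cancel the two denominators `x - y` in `∫ P_{k,n} P_{j,m} W_{1/2}`. What
is left is an integral of a product of two `2 × 2` determinants over half of a square, which
Andréief's identity evaluates as a determinant of inner products of the `p_i`; this gives
orthonormality.

Multiplying the Bézoutian of `f` and `g` by `x + y` or `x * y` produces Bézoutians in which `f` and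
`g` are multiplied by `x` or `y`. Hence the Bézoutians of polynomials of degree at most `N + 1` span
all bivariate polynomials of degree at most `N`, and by bilinearity so do the `P_{k,n}` with
`k ≤ n ≤ N`. Degrees and the basis property follow from this and orthonormality.
-/

open scoped Polynomial

section PolynomialIdentities

open MvPolynomial

variable {R : Type*} [CommRing R]

variable (R) in
/-- The polynomial whose value at `(x + y, x * y)` is `(x ^ n - y ^ n) / (x - y)`. -/
def powDividedDifference : ℕ → MvPolynomial (Fin 2) R
  | 0 => 0
  | 1 => 1
  | n + 2 => X 0 * powDividedDifference (n + 1) - X 1 * powDividedDifference n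

variable (R) in
/-- The polynomial whose value at `(x + y, x * y)` is
`(x ^ a * y ^ b - y ^ a * x ^ b) / (x - y)`. -/
def monomialBezoutian : ℕ → ℕ → MvPolynomial (Fin 2) R
  | a, 0 => powDividedDifference R a
  | 0, b + 1 => -powDividedDifference R (b + 1)
  | a + 1, b + 1 => X 1 * monomialBezoutian a b

/-- The Bézoutian `(f(x) g(y) - f(y) g(x)) / (x - y)` of two univariate polynomials, written as a
polynomial in the elementary symmetric functions `x + y` (variable `0`) and `x * y`
(variable `1`). -/
def bezoutian : R[X] →ₗ[R] R[X] →ₗ[R] MvPolynomial (Fin 2) R :=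
  (Polynomial.basisMonomials R).constr R fun a ↦
    (Polynomial.basisMonomials R).constr R fun b ↦ monomialBezoutian R a b

lemma bezoutian_X_pow_X_pow (a b : ℕ) :
    bezoutian (Polynomial.X ^ a : R[X]) (Polynomial.X ^ b) = monomialBezoutian R a b := by
  have basis_apply (n : ℕ) : Polynomial.X ^ n = Polynomial.basisMonomials R n := by
    rw [Polynomial.coe_basisMonomials, Polynomial.X_pow_eq_monomial]
  rw [basis_apply, basis_apply, bezoutian, Module.Basis.constr_basis, Module.Basis.constr_basis]

lemma bezoutian_X_one : bezoutian (Polynomial.X : R[X]) 1 = 1 := by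
  simpa [monomialBezoutian, powDividedDifference] using bezoutian_X_pow_X_pow (R := R) 1 0

lemma eval_powDividedDifference_mul_sub (n : ℕ) (x y : R) :
    eval ![x + y, x * y] (powDividedDifference R n) * (x - y) = x ^ n - y ^ n := by
  induction n using Nat.twoStepInduction with
  | zero => simp [powDividedDifference]
  | one => simp [powDividedDifference]
  | more n ih ih' =>
    simp only [powDividedDifference, map_sub, map_mul, eval_X, Matrix.cons_val_zero,
      Matrix.cons_val_one]
    linear_combination (x + y) * ih' - x * y * ih

lemma eval_monomialBezoutian_mul_sub (a b : ℕ) (x y : R) :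
    eval ![x + y, x * y] (monomialBezoutian R a b) * (x - y) = x ^ a * y ^ b - y ^ a * x ^ b := by
  induction a, b using monomialBezoutian.induct with
  | case1 a => simp [monomialBezoutian, eval_powDividedDifference_mul_sub]
  | case2 b =>
    rw [monomialBezoutian, map_neg, neg_mul, eval_powDividedDifference_mul_sub]
    simp
  | case3 a b ih =>
    simp only [monomialBezoutian, map_mul, eval_X, Matrix.cons_val_one, Matrix.cons_val_fin_one,
      Nat.succ_eq_add_one]
    linear_combination x * y * ih

theorem eval_bezoutian_mul_sub (f g : R[X]) (x y : R) :
    eval ![x + y, x * y] (bezoutian f g) * (x - y)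
      = f.eval x * g.eval y - f.eval y * g.eval x := by
  induction f using Polynomial.induction_on' with
  | add f₁ f₂ h₁ h₂ =>
    simp only [map_add, LinearMap.add_apply, Polynomial.eval_add]
    linear_combination h₁ + h₂
  | monomial a c =>
    induction g using Polynomial.induction_on' with
    | add g₁ g₂ h₁ h₂ =>
      simp only [map_add, Polynomial.eval_add]
      linear_combination h₁ + h₂
    | monomial b d =>
      simp only [← Polynomial.smul_X_eq_monomial, map_smul, LinearMap.smul_apply, smul_eval,
        bezoutian_X_pow_X_pow, Polynomial.eval_smul, Polynomial.eval_pow, Polynomial.eval_X,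
        smul_eq_mul]
      linear_combination c * d * eval_monomialBezoutian_mul_sub a b x y

lemma totalDegree_X_mul_le {P : MvPolynomial (Fin 2) R} {n : ℕ} (hP : P.totalDegree ≤ n)
    (i : Fin 2) : (X i * P).totalDegree ≤ n + 1 := by
  have hX : (X i : MvPolynomial (Fin 2) R).totalDegree ≤ 1 :=
    (totalDegree_monomial_le _ _).trans (by simp)
  have := totalDegree_mul (X i) P
  omega

lemma totalDegree_powDividedDifference_le {n N : ℕ} (hn : n ≤ N + 1) :
    (powDividedDifference R n).totalDegree ≤ N := by
  induction n using Nat.twoStepInduction generalizing N with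
  | zero => simp [powDividedDifference]
  | one => simp [powDividedDifference]
  | more n ih ih' =>
    obtain ⟨N, rfl⟩ : ∃ M, N = M + 1 := ⟨N - 1, by omega⟩
    exact (totalDegree_sub _ _).trans <| max_le
      (totalDegree_X_mul_le (ih' (by omega)) 0) (totalDegree_X_mul_le (ih (by omega)) 1)

lemma totalDegree_monomialBezoutian_le {a b N : ℕ} (ha : a ≤ N + 1) (hb : b ≤ N + 1) :
    (monomialBezoutian R a b).totalDegree ≤ N := by
  induction a, b using monomialBezoutian.induct generalizing N with
  | case1 a =>
    rw [monomialBezoutian]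
    exact totalDegree_powDividedDifference_le ha
  | case2 b =>
    rw [monomialBezoutian, totalDegree_neg]
    exact totalDegree_powDividedDifference_le hb
  | case3 a b ih =>
    rw [monomialBezoutian]
    obtain rfl | ⟨N, rfl⟩ : N = 0 ∨ ∃ M, N = M + 1 := by cases N <;> simp
    · obtain ⟨rfl, rfl⟩ : a = 0 ∧ b = 0 := by omega
      simp [monomialBezoutian, powDividedDifference]
    · exact totalDegree_X_mul_le (ih (by omega) (by omega)) 1

lemma X_mul_mem_degreeLT {m : ℕ} {f : R[X]} (hf : f ∈ Polynomial.degreeLT R m) :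
    Polynomial.X * f ∈ Polynomial.degreeLT R (m + 1) := by
  rw [Polynomial.mem_degreeLT, Polynomial.degree_lt_iff_coeff_zero] at hf ⊢
  rintro (_ | k) hk
  · simp
  · rw [Polynomial.coeff_X_mul]
    exact hf k (by omega)

variable [IsDomain R] [Infinite R]

theorem eq_of_eval_sum_prod_eq {P Q : MvPolynomial (Fin 2) R}
    (h : ∀ x y : R, x ≠ y → eval ![x + y, x * y] P = eval ![x + y, x * y] Q) : P = Q := by
  have eval_esymm (z : Fin 2 → R) (P : MvPolynomial (Fin 2) R) :
      eval z (esymmAlgHom (Fin 2) R 2 P : MvPolynomial (Fin 2) R)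
        = eval ![z 0 + z 1, z 0 * z 1] P := by
    have hesymm : (fun i : Fin 2 ↦ eval z (esymm (Fin 2) R (i + 1))) = ![z 0 + z 1, z 0 * z 1] := by
      funext i
      fin_cases i
      · simp [esymm_one]
      · have hpairs : Finset.powersetCard 2 (Finset.univ : Finset (Fin 2)) = {Finset.univ} := by
          decide
        simp [esymm, hpairs]
    have heval : (eval z).comp (algebraMap R (MvPolynomial (Fin 2) R)) = RingHom.id R :=
      RingHom.ext fun c ↦ eval_C c
    rw [esymmAlgHom_apply, map_aeval, hesymm, heval, eval]
  have hmul : ((esymmAlgHom (Fin 2) R 2 P).val - (esymmAlgHom (Fin 2) R 2 Q).val)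
      * (X 0 - X 1) = 0 := by
    refine funext fun z ↦ ?_
    rcases eq_or_ne (z 0) (z 1) with hz | hz
    · simp [hz]
    · simp [eval_esymm, h _ _ hz]
  have hX : (X 0 - X 1 : MvPolynomial (Fin 2) R) ≠ 0 :=
    sub_ne_zero.2 (X_injective.ne (by decide))
  have := (mul_eq_zero.1 hmul).resolve_right hX
  exact esymmAlgHom_injective R (by simp) (Subtype.ext (sub_eq_zero.1 this))

lemma eq_bezoutian {P : MvPolynomial (Fin 2) R} {f g : R[X]}
    (h : ∀ x y : R,
      eval ![x + y, x * y] P * (x - y) = f.eval x * g.eval y - f.eval y * g.eval x) :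
    P = bezoutian f g :=
  eq_of_eval_sum_prod_eq fun x y hxy ↦ mul_right_cancel₀ (sub_ne_zero.2 hxy) <|
    (h x y).trans (eval_bezoutian_mul_sub f g x y).symm

lemma isAlt_bezoutian : (bezoutian (R := R)).IsAlt := fun f ↦
  (eq_bezoutian fun x y ↦ by rw [map_zero]; ring).symm

lemma X_zero_mul_bezoutian (f g : R[X]) :
    X 0 * bezoutian f g = bezoutian (Polynomial.X * f) g + bezoutian f (Polynomial.X * g) := by
  rw [← sub_eq_iff_eq_add']
  refine eq_bezoutian fun x y ↦ ?_
  have h := eval_bezoutian_mul_sub f g x y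
  have hf := eval_bezoutian_mul_sub (Polynomial.X * f) g x y
  simp only [map_sub, map_mul, eval_X, Matrix.cons_val_zero, Polynomial.eval_mul,
    Polynomial.eval_X] at hf ⊢
  linear_combination (x + y) * h - hf

lemma X_one_mul_bezoutian (f g : R[X]) :
    X 1 * bezoutian f g = bezoutian (Polynomial.X * f) (Polynomial.X * g) := by
  refine eq_bezoutian fun x y ↦ ?_
  simp only [map_mul, eval_X, Matrix.cons_val_one, Matrix.cons_val_fin_one, Polynomial.eval_mul,
    Polynomial.eval_X]
  linear_combination x * y * eval_bezoutian_mul_sub f g x y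

lemma X_mul_mem_map₂_bezoutian {N : ℕ} {P : MvPolynomial (Fin 2) R}
    (hP : P ∈ Submodule.map₂ bezoutian (Polynomial.degreeLT R (N + 2))
      (Polynomial.degreeLT R (N + 2))) (i : Fin 2) :
    X i * P ∈ Submodule.map₂ bezoutian (Polynomial.degreeLT R (N + 3))
      (Polynomial.degreeLT R (N + 3)) := by
  have hle : Polynomial.degreeLT R (N + 2) ≤ Polynomial.degreeLT R (N + 3) :=
    Polynomial.degreeLT_mono (by omega)
  rw [← LinearMap.mulLeft_apply (R := R), ← Submodule.mem_comap]
  refine Submodule.map₂_le.2 (fun f hf g hg ↦ ?_) hP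
  rw [Submodule.mem_comap, LinearMap.mulLeft_apply]
  have hXf := X_mul_mem_degreeLT hf
  have hXg := X_mul_mem_degreeLT hg
  fin_cases i
  · rw [Fin.zero_eta, X_zero_mul_bezoutian]
    exact add_mem (Submodule.apply_mem_map₂ _ hXf (hle hg))
      (Submodule.apply_mem_map₂ _ (hle hf) hXg)
  · rw [Fin.mk_one, X_one_mul_bezoutian]
    exact Submodule.apply_mem_map₂ _ hXf hXg

lemma monomial_mem_map₂_bezoutian {N : ℕ} (s : Fin 2 →₀ ℕ) (c : R) (hs : s 0 + s 1 ≤ N) :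
    monomial s c ∈ Submodule.map₂ bezoutian (Polynomial.degreeLT R (N + 2))
      (Polynomial.degreeLT R (N + 2)) := by
  have hone : (1 : MvPolynomial (Fin 2) R) ∈ Submodule.map₂ bezoutian
      (Polynomial.degreeLT R (0 + 2)) (Polynomial.degreeLT R (0 + 2)) := by
    rw [← bezoutian_X_one]
    refine Submodule.apply_mem_map₂ _ ?_ ?_ <;> rw [Polynomial.mem_degreeLT]
    · exact Polynomial.degree_X_le.trans_lt (by norm_num)
    · exact Polynomial.degree_one_le.trans_lt (by norm_num)
  have hpow (a b : ℕ) : X 1 ^ b * X 0 ^ a ∈ Submodule.map₂ bezoutian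
      (Polynomial.degreeLT R (a + b + 2)) (Polynomial.degreeLT R (a + b + 2)) := by
    induction b with
    | zero =>
      induction a with
      | zero => simpa using hone
      | succ a ih => simpa only [pow_succ', pow_zero, one_mul] using X_mul_mem_map₂_bezoutian ih 0
    | succ b ih => simpa only [pow_succ', mul_assoc, ← add_assoc]
        using X_mul_mem_map₂_bezoutian ih 1
  have hle : Polynomial.degreeLT R (s 0 + s 1 + 2) ≤ Polynomial.degreeLT R (N + 2) :=
    Polynomial.degreeLT_mono (by omega)
  rw [monomial_eq, Finsupp.prod_fintype _ _ (by simp), Fin.prod_univ_two, mul_comm (X 0 ^ s 0),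
    C_mul']
  exact Submodule.smul_mem _ _ (Submodule.map₂_le_map₂ hle hle (hpow _ _))

theorem map₂_bezoutian_degreeLT (N : ℕ) :
    Submodule.map₂ bezoutian (Polynomial.degreeLT R (N + 2)) (Polynomial.degreeLT R (N + 2))
      = restrictTotalDegree (Fin 2) R N := by
  classical
  apply le_antisymm
  · rw [Polynomial.degreeLT_eq_span_X_pow, Submodule.map₂_span_span, Submodule.span_le]
    simp only [Finset.coe_image, Finset.coe_range, image2_image_left, image2_image_right,
      bezoutian_X_pow_X_pow]
    rintro _ ⟨a, ha, b, hb, rfl⟩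
    exact (mem_restrictTotalDegree _ _ _).2 <| totalDegree_monomialBezoutian_le
      (Nat.lt_succ_iff.1 ha) (Nat.lt_succ_iff.1 hb)
  · intro P hP
    rw [mem_restrictTotalDegree] at hP
    rw [P.as_sum]
    refine Submodule.sum_mem _ fun s hs ↦ monomial_mem_map₂_bezoutian s _ ?_
    rw [← Fin.sum_univ_two (fun i ↦ s i), ← Finsupp.sum_fintype s (fun _ e ↦ e) (by simp)]
    exact (le_totalDegree hs).trans hP

/-- The pairs `(k, n)` with `k ≤ n ≤ N`, which index the polynomials `P k n` of degree at most
`N`. -/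
def indexTriangle (N : ℕ) : Set (ℕ × ℕ) := {i | i.1 ≤ i.2 ∧ i.2 ≤ N}

theorem span_bezoutian_sequence (S : Polynomial.Sequence R)
    (hS : ∀ i, IsUnit (S i).leadingCoeff) (N : ℕ) :
    Submodule.span R ((fun i ↦ bezoutian (S (i.2 + 1)) (S i.1)) '' indexTriangle N)
      = restrictTotalDegree (Fin 2) R N := by
  rw [← map₂_bezoutian_degreeLT, ← S.span_degreeLT fun i _ ↦ hS i, Submodule.map₂_span_span]
  apply le_antisymm
  · refine Submodule.span_mono ?_
    rintro _ ⟨⟨k, n⟩, ⟨hk, hn⟩, rfl⟩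
    dsimp only at hk hn
    exact ⟨_, ⟨n + 1, mem_Iio.2 (by omega), rfl⟩, _, ⟨k, mem_Iio.2 (by omega), rfl⟩, rfl⟩
  · rw [Submodule.span_le]
    rintro _ ⟨_, ⟨i, hi, rfl⟩, _, ⟨j, hj, rfl⟩, rfl⟩
    rw [mem_Iio] at hi hj
    rcases lt_trichotomy i j with hij | rfl | hij
    · obtain ⟨n, rfl⟩ := Nat.exists_eq_add_one_of_ne_zero (Nat.ne_zero_of_lt hij)
      dsimp only
      rw [← isAlt_bezoutian.neg]
      exact neg_mem (Submodule.subset_span ⟨(i, n), ⟨by omega, by omega⟩, rfl⟩)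
    · dsimp only
      rw [isAlt_bezoutian.self_eq_zero]
      exact zero_mem _
    · obtain ⟨n, rfl⟩ := Nat.exists_eq_add_one_of_ne_zero (Nat.ne_zero_of_lt hij)
      exact Submodule.subset_span ⟨(j, n), ⟨by dsimp only; omega, by dsimp only; omega⟩, rfl⟩

end PolynomialIdentities

section OrthonormalFamily

open Finsupp (linearCombination supported)

variable {R M ι : Type*} [CommSemiring R] [AddCommMonoid M] [Module R M]
  {B : LinearMap.BilinForm R M} {e : ι → M} {s t : Set ι}

lemma apply_linearCombination_of_orthonormal [DecidableEq ι]
    (horth : ∀ i ∈ s, ∀ j ∈ s, B (e i) (e j) = if i = j then 1 else 0)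
    {l : ι →₀ R} (hl : l ∈ supported R R s) {j : ι} (hj : j ∈ s) :
    B (linearCombination R e l) (e j) = l j := by
  have horth_smul : ∀ i ∈ l.support, l i * B (e i) (e j) = if i = j then l i else 0 :=
    fun i hi ↦ by rw [horth i (hl hi) j hj, mul_ite, mul_one, mul_zero]
  simp only [Finsupp.linearCombination_apply, Finsupp.sum, map_sum, map_smul,
    LinearMap.sum_apply, LinearMap.smul_apply, smul_eq_mul]
  rw [Finset.sum_congr rfl horth_smul, Finset.sum_ite_eq', ite_eq_left_iff,
    Finsupp.notMem_support_iff]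
  exact Eq.symm

theorem mem_span_image_of_orthonormal [DecidableEq ι]
    (horth : ∀ i ∈ s, ∀ j ∈ s, B (e i) (e j) = if i = j then 1 else 0)
    {x : M} (hx : x ∈ Submodule.span R (e '' s)) (hxt : ∀ j ∈ s \ t, B x (e j) = 0) :
    x ∈ Submodule.span R (e '' t) := by
  obtain ⟨l, hl, rfl⟩ := (Finsupp.mem_span_image_iff_linearCombination R).1 hx
  refine (Finsupp.mem_span_image_iff_linearCombination R).2 ⟨l, fun j hj ↦ ?_, rfl⟩
  by_contra hjt
  have hjs : j ∈ s := hl hj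
  exact Finsupp.mem_support_iff.1 hj <|
    (apply_linearCombination_of_orthonormal horth hl hjs).symm.trans (hxt j ⟨hjs, hjt⟩)

end OrthonormalFamily

section MomentForm

open MvPolynomial

variable {D : Set (ℝ × ℝ)} {W : ℝ × ℝ → ℝ}

/-- The functional `P ↦ ∫_D P W` on bivariate polynomials, for a weight `W` with finite moments
on `D`. -/
def momentFunctional (hWint : ∀ P, IntegrableOn (fun q ↦ evalP P q * W q) D) :
    MvPolynomial (Fin 2) ℝ →ₗ[ℝ] ℝ where
  toFun P := ∫ q in D, evalP P q * W q
  map_add' P Q := by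
    rw [← integral_add (hWint P) (hWint Q)]
    simp only [evalP, map_add, add_mul]
  map_smul' c P := by
    simp only [RingHom.id_apply, smul_eq_mul, ← integral_const_mul, evalP, smul_eval, mul_assoc]

/-- The bilinear form `(P, Q) ↦ ∫_D P Q W` on bivariate polynomials. -/
def momentForm (hWint : ∀ P, IntegrableOn (fun q ↦ evalP P q * W q) D) :
    LinearMap.BilinForm ℝ (MvPolynomial (Fin 2) ℝ) :=
  (LinearMap.mul ℝ _).compr₂ (momentFunctional hWint)

lemma momentForm_apply (hWint : ∀ P, IntegrableOn (fun q ↦ evalP P q * W q) D)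
    (P Q : MvPolynomial (Fin 2) ℝ) :
    momentForm hWint P Q = ∫ q in D, evalP P q * evalP Q q * W q := by
  simp only [momentForm, momentFunctional, LinearMap.compr₂_apply, LinearMap.mul_apply',
    LinearMap.coe_mk, AddHom.coe_mk, evalP, map_mul]

variable {P : ℕ → ℕ → MvPolynomial (Fin 2) ℝ}
  (hWint : ∀ P, IntegrableOn (fun q ↦ evalP P q * W q) D)
  (hspan : ∀ N, Submodule.span ℝ ((fun i ↦ P i.1 i.2) '' indexTriangle N)
    = restrictTotalDegree (Fin 2) ℝ N)
  (horth : ∀ n k m j, k ≤ n → j ≤ m →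
    ∫ q in D, evalP (P k n) q * evalP (P j m) q * W q = if k = j ∧ n = m then 1 else 0)

include hWint hspan horth

lemma integral_mul_eq_zero_of_totalDegree_lt {k n : ℕ} (hk : k ≤ n)
    {Q : MvPolynomial (Fin 2) ℝ} (hQ : Q.totalDegree < n) :
    ∫ q in D, evalP (P k n) q * evalP Q q * W q = 0 := by
  have hle : Submodule.span ℝ ((fun i ↦ P i.1 i.2) '' indexTriangle (n - 1))
      ≤ LinearMap.ker (momentForm hWint (P k n)) := by
    rw [Submodule.span_le]
    rintro _ ⟨⟨j, m⟩, ⟨hj, hm⟩, rfl⟩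
    dsimp only at hj hm
    rw [SetLike.mem_coe, LinearMap.mem_ker, momentForm_apply, horth n k m j hk hj,
      if_neg (by omega)]
  rw [← momentForm_apply hWint, ← LinearMap.mem_ker]
  apply hle
  rw [hspan, mem_restrictTotalDegree]
  omega

lemma totalDegree_eq_of_orthonormal {k n : ℕ} (hk : k ≤ n) : (P k n).totalDegree = n := by
  apply le_antisymm
  · rw [← mem_restrictTotalDegree, ← hspan]
    exact Submodule.subset_span ⟨(k, n), ⟨hk, le_rfl⟩, rfl⟩
  · by_contra! hlt
    have hself := horth n k n k hk hk
    rw [integral_mul_eq_zero_of_totalDegree_lt hWint hspan horth hk hlt] at hself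
    simp at hself

theorem isONBVn_of_orthonormal (n : ℕ) : isONBVn D W n (fun k ↦ P k n) := by
  have hdeg {k m : ℕ} (hk : k ≤ m) : (P k m).totalDegree = m :=
    totalDegree_eq_of_orthonormal hWint hspan horth hk
  refine ⟨fun k hk ↦ ⟨hdeg hk, fun Q hQ ↦
    integral_mul_eq_zero_of_totalDegree_lt hWint hspan horth hk hQ⟩, fun k hk j hj ↦ ?_, ?_⟩
  · simpa only [and_true] using horth n k n j hk hj
  · rintro Q ⟨hQdeg, hQorth⟩
    have hQ : Q ∈ Submodule.span ℝ ((fun i ↦ P i.1 i.2) '' indexTriangle n) := by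
      rw [hspan, mem_restrictTotalDegree, hQdeg]
    have hQ_top : Q ∈ Submodule.span ℝ ((fun i ↦ P i.1 i.2) '' (Iic n ×ˢ {n})) := by
      refine mem_span_image_of_orthonormal (B := momentForm hWint) ?_ hQ ?_
      · rintro ⟨k, m⟩ hk ⟨j, l⟩ hj
        simp only [momentForm_apply, horth m k l j hk.1 hj.1, Prod.mk.injEq]
      · rintro ⟨j, m⟩ ⟨⟨hj, hm⟩, hjm⟩
        dsimp only at hj hm
        have hmn : m ≠ n := fun h ↦ hjm ⟨mem_Iic.2 (hj.trans hm), h⟩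
        rw [momentForm_apply]
        exact hQorth _ (by rw [hdeg hj]; omega)
    rwa [prod_singleton, image_image] at hQ_top

end MomentForm

section ProductIntegrals

variable {α : Type*} [MeasurableSpace α] {μ : Measure α}

section Andreief

variable {𝕜 : Type*} [RCLike 𝕜] {f g F G : α → 𝕜}
  (hfF : Integrable (fun x ↦ f x * F x) μ) (hfG : Integrable (fun x ↦ f x * G x) μ)
  (hgF : Integrable (fun x ↦ g x * F x) μ) (hgG : Integrable (fun x ↦ g x * G x) μ)

include hfF hfG hgF hgG

lemma integrable_det_mul_det :
    Integrable (fun z ↦ (f z.1 * g z.2 - f z.2 * g z.1) * (F z.1 * G z.2 - F z.2 * G z.1))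
      (μ.prod μ) := by
  refine (((hfF.mul_prod hgG).add (hgG.mul_prod hfF)).sub
    ((hfG.mul_prod hgF).add (hgF.mul_prod hfG))).congr (.of_forall fun z ↦ ?_)
  simp only [Pi.add_apply, Pi.sub_apply]
  ring

/-- Andréief's identity for `2 × 2` determinants. -/
theorem integral_det_mul_det [SFinite μ] :
    ∫ z, (f z.1 * g z.2 - f z.2 * g z.1) * (F z.1 * G z.2 - F z.2 * G z.1) ∂μ.prod μ
      = 2 * ((∫ x, f x * F x ∂μ) * (∫ x, g x * G x ∂μ)
        - (∫ x, f x * G x ∂μ) * ∫ x, g x * F x ∂μ) := by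
  have hdiag := integral_add' (hfF.mul_prod hgG) (hgG.mul_prod hfF)
  have hcross := integral_add' (hfG.mul_prod hgF) (hgF.mul_prod hfG)
  have hexpand := integral_sub' ((hfF.mul_prod hgG).add (hgG.mul_prod hfF))
    ((hfG.mul_prod hgF).add (hgF.mul_prod hfG))
  have hprod (φ ψ φ' ψ' : α → 𝕜) : ∫ z, φ z.1 * ψ z.1 * (φ' z.2 * ψ' z.2) ∂μ.prod μ
      = (∫ x, φ x * ψ x ∂μ) * ∫ x, φ' x * ψ' x ∂μ :=
    integral_prod_mul (fun x ↦ φ x * ψ x) fun x ↦ φ' x * ψ' x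
  rw [hdiag, hcross, hprod, hprod, hprod, hprod] at hexpand
  convert hexpand using 1
  · refine integral_congr_ae (.of_forall fun z ↦ ?_)
    simp only [Pi.add_apply, Pi.sub_apply]
    ring
  · ring

end Andreief

variable [SFinite μ] [NullSingletonClass μ]

lemma ae_fst_ne_snd [MeasurableEq α] : ∀ᵐ z ∂μ.prod μ, z.1 ≠ z.2 := by
  refine (Measure.ae_prod_iff_ae_ae
    (measurableSet_eq_fun measurable_fst measurable_snd).compl).2 (.of_forall fun x ↦ ?_)
  filter_upwards [compl_mem_ae_iff.2 (measure_singleton x)] with y hy using Ne.symm hy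

theorem integral_prod_eq_two_smul_setIntegral_lt [TopologicalSpace α] [SecondCountableTopology α]
    [LinearOrder α] [OrderClosedTopology α] [OpensMeasurableSpace α] {E : Type*}
    [NormedAddCommGroup E] [NormedSpace ℝ E] {H : α × α → E} (hHint : Integrable H (μ.prod μ))
    (hsymm : ∀ z, H z.swap = H z) :
    ∫ z, H z ∂μ.prod μ = (2 : ℝ) • ∫ z in {z | z.1 < z.2}, H z ∂μ.prod μ := by
  have hlt : MeasurableSet {z : α × α | z.1 < z.2} := measurableSet_lt measurable_fst measurable_snd
  have hcompl : ({z | z.1 < z.2}ᶜ : Set (α × α)) =ᵐ[μ.prod μ] Prod.swap ⁻¹' {z | z.1 < z.2} := by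
    rw [eventuallyEq_set]
    filter_upwards [ae_fst_ne_snd (μ := μ)] with z hz
    exact not_lt.trans hz.symm.le_iff_lt
  have hswap : ∫ z in Prod.swap ⁻¹' {z | z.1 < z.2}, H z ∂μ.prod μ
      = ∫ z in {z | z.1 < z.2}, H z ∂μ.prod μ := by
    simpa only [hsymm] using Measure.measurePreserving_swap.setIntegral_preimage_emb
      MeasurableEquiv.prodComm.measurableEmbedding H {z | z.1 < z.2}
  rw [← integral_add_compl hlt hHint, setIntegral_congr_set hcompl, hswap, two_smul]

end ProductIntegrals

section Vieta

/-- The map sending a pair of numbers to its elementary symmetric functions. -/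
def vietaMap (z : ℝ × ℝ) : ℝ × ℝ := (z.1 + z.2, z.1 * z.2)

/-- The derivative of `vietaMap` at `z`. -/
def vietaDeriv (z : ℝ × ℝ) : ℝ × ℝ →L[ℝ] ℝ × ℝ :=
  (Matrix.toLin (.finTwoProd ℝ) (.finTwoProd ℝ) !![1, 1; z.2, z.1]).toContinuousLinearMap

lemma hasFDerivAt_vietaMap (z : ℝ × ℝ) : HasFDerivAt vietaMap (vietaDeriv z) z := by
  rw [vietaDeriv, Matrix.toLin_finTwoProd_toContinuousLinearMap]
  convert! (hasFDerivAt_fst.add hasFDerivAt_snd).prodMk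
    ((hasFDerivAt_fst (𝕜 := ℝ) (p := z)).mul hasFDerivAt_snd) using 2
  · simp
  · simp [add_comm]

lemma det_vietaDeriv (z : ℝ × ℝ) : (vietaDeriv z).det = z.1 - z.2 := by
  rw [vietaDeriv, LinearMap.det_toContinuousLinearMap, LinearMap.det_toLin, Matrix.det_fin_two_of]
  ring

lemma sqrt_discrim_vietaMap {z : ℝ × ℝ} (hz : z.1 ≤ z.2) :
    √((vietaMap z).1 ^ 2 - 4 * (vietaMap z).2) = z.2 - z.1 := by
  rw [← Real.sqrt_sq (sub_nonneg.2 hz), vietaMap]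
  ring_nf

lemma xRoot_vietaMap {z : ℝ × ℝ} (hz : z.1 ≤ z.2) : xRoot (vietaMap z) = z.1 := by
  rw [xRoot, sqrt_discrim_vietaMap hz, vietaMap]
  ring

lemma yRoot_vietaMap {z : ℝ × ℝ} (hz : z.1 ≤ z.2) : yRoot (vietaMap z) = z.2 := by
  rw [yRoot, sqrt_discrim_vietaMap hz, vietaMap]
  ring

lemma injOn_vietaMap : InjOn vietaMap {z | z.1 ≤ z.2} := fun z hz z' hz' h ↦
  Prod.ext (by rw [← xRoot_vietaMap hz, h, xRoot_vietaMap hz'])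
    (by rw [← yRoot_vietaMap hz, h, yRoot_vietaMap hz'])

section ChangeOfVariables

variable {E : Type*} [NormedAddCommGroup E] [NormedSpace ℝ E] {t : Set (ℝ × ℝ)}
  (ht : MeasurableSet t) (hle : t ⊆ {z | z.1 ≤ z.2}) (F : ℝ × ℝ → E)

include hle in
lemma eqOn_abs_det_vietaDeriv_smul :
    EqOn (fun z ↦ |(vietaDeriv z).det| • F (vietaMap z))
      (fun z ↦ (z.2 - z.1) • F (vietaMap z)) t := fun z hz ↦ by
  dsimp only
  rw [det_vietaDeriv, abs_sub_comm, abs_of_nonneg (sub_nonneg.2 (hle hz))]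

include ht hle

theorem setIntegral_image_vietaMap :
    ∫ q in vietaMap '' t, F q = ∫ z in t, (z.2 - z.1) • F (vietaMap z) := by
  rw [integral_image_eq_integral_abs_det_fderiv_smul volume ht
    (fun z _ ↦ (hasFDerivAt_vietaMap z).hasFDerivWithinAt) (injOn_vietaMap.mono hle)]
  exact setIntegral_congr_fun ht (eqOn_abs_det_vietaDeriv_smul hle F)

theorem integrableOn_image_vietaMap :
    IntegrableOn F (vietaMap '' t) ↔ IntegrableOn (fun z ↦ (z.2 - z.1) • F (vietaMap z)) t := by
  rw [integrableOn_image_iff_integrableOn_abs_det_fderiv_smul volume ht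
    (fun z _ ↦ (hasFDerivAt_vietaMap z).hasFDerivWithinAt) (injOn_vietaMap.mono hle)]
  exact integrableOn_congr_fun (eqOn_abs_det_vietaDeriv_smul hle F) ht

end ChangeOfVariables

end Vieta

section HalfWeight

open MvPolynomial

/-- The points `(x + y, x * y)` with `x < y` both in `s`; this is `Ω` for `s = (-1, 1)`. -/
def vietaDomain (s : Set ℝ) : Set (ℝ × ℝ) := vietaMap '' (s ×ˢ s ∩ {z | z.1 < z.2})

lemma vietaDomain_Ioo_eq_omegaDom : vietaDomain (Ioo (-1) 1) = omegaDom := by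
  ext q
  constructor
  · rintro ⟨z, ⟨⟨hx, hy⟩, hlt⟩, rfl⟩
    exact ⟨z.1, z.2, hx.1, hlt, hy.2, rfl⟩
  · rintro ⟨x, y, hx, hlt, hy, rfl⟩
    exact ⟨(x, y), ⟨⟨⟨hx, hlt.trans hy⟩, hx.trans hlt, hy⟩, hlt⟩, rfl⟩

/-- The Koornwinder-type weight `W_{1/2}` attached to a univariate weight `w`; the normalising
constant `a` plays the role of `a_w^{1/2}`. -/
def halfWeight (w : ℝ → ℝ) (a : ℝ) (q : ℝ × ℝ) : ℝ :=
  2 * a * w (xRoot q) * w (yRoot q) * (q.1 ^ 2 - 4 * q.2) ^ ((1 : ℝ) / 2)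

lemma halfWeight_vietaMap (w : ℝ → ℝ) (a : ℝ) {z : ℝ × ℝ} (hz : z.1 ≤ z.2) :
    halfWeight w a (vietaMap z) = 2 * a * w z.1 * w z.2 * (z.2 - z.1) := by
  rw [halfWeight, xRoot_vietaMap hz, yRoot_vietaMap hz, ← Real.sqrt_eq_rpow,
    sqrt_discrim_vietaMap hz]

lemma integrable_eval_mul {μ : Measure ℝ} {w : ℝ → ℝ}
    (hw : ∀ k : ℕ, Integrable (fun x ↦ x ^ k * w x) μ) (f : ℝ[X]) :
    Integrable (fun x ↦ f.eval x * w x) μ := by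
  simp only [Polynomial.eval_eq_sum_range, Finset.sum_mul, mul_assoc]
  exact integrable_finsetSum _ fun k _ ↦ (hw k).const_mul _

lemma sub_smul_bezoutian_mul_bezoutian_mul_halfWeight (w : ℝ → ℝ) (a : ℝ) (f g f' g' : ℝ[X])
    {z : ℝ × ℝ} (hz : z.1 ≤ z.2) :
    (z.2 - z.1) • (evalP (bezoutian f g) (vietaMap z) * evalP (bezoutian f' g') (vietaMap z)
        * halfWeight w a (vietaMap z))
      = 2 * a * ((f.eval z.1 * g.eval z.2 - f.eval z.2 * g.eval z.1)
        * (f'.eval z.1 * w z.1 * (g'.eval z.2 * w z.2)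
          - f'.eval z.2 * w z.2 * (g'.eval z.1 * w z.1))) := by
  have h := eval_bezoutian_mul_sub f g z.1 z.2
  have h' := eval_bezoutian_mul_sub f' g' z.1 z.2
  rw [smul_eq_mul, halfWeight_vietaMap w a hz, ← h, evalP, evalP, vietaMap]
  linear_combination 2 * a * w z.1 * w z.2 * (z.1 - z.2)
    * eval ![z.1 + z.2, z.1 * z.2] (bezoutian f g) * h'

variable {s : Set ℝ} {w : ℝ → ℝ} (hs : MeasurableSet s)
  (hw : ∀ k : ℕ, IntegrableOn (fun x ↦ x ^ k * w x) s)

include hw in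
lemma integrableOn_eval_mul_eval_mul (f g : ℝ[X]) :
    IntegrableOn (fun x ↦ f.eval x * (g.eval x * w x)) s := by
  simpa only [IntegrableOn, Polynomial.eval_mul, mul_assoc] using integrable_eval_mul hw (f * g)

lemma prod_inter_lt_subset_le : s ×ˢ s ∩ {z : ℝ × ℝ | z.1 < z.2} ⊆ {z | z.1 ≤ z.2} :=
  inter_subset_right.trans (ofPred_subset_ofPred.2 fun _ ↦ le_of_lt)

include hs in
lemma measurableSet_prod_inter_lt : MeasurableSet (s ×ˢ s ∩ {z : ℝ × ℝ | z.1 < z.2}) :=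
  (hs.prod hs).inter (measurableSet_lt measurable_fst measurable_snd)

lemma prod_restrict_restrict_lt :
    ((volume.restrict s).prod (volume.restrict s)).restrict {z : ℝ × ℝ | z.1 < z.2}
      = volume.restrict (s ×ˢ s ∩ {z | z.1 < z.2}) := by
  rw [Measure.prod_restrict, Measure.restrict_restrict
    (measurableSet_lt measurable_fst measurable_snd), inter_comm, Measure.volume_eq_prod]

include hs hw

lemma integrableOn_bezoutian_mul_bezoutian_mul_halfWeight (a : ℝ) (f g f' g' : ℝ[X]) :
    IntegrableOn (fun q ↦ evalP (bezoutian f g) q * evalP (bezoutian f' g') q * halfWeight w a q)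
      (vietaDomain s) := by
  have hdet := integrable_det_mul_det (integrableOn_eval_mul_eval_mul hw f f')
    (integrableOn_eval_mul_eval_mul hw f g') (integrableOn_eval_mul_eval_mul hw g f')
    (integrableOn_eval_mul_eval_mul hw g g')
  have hdet_lt := (hdet.integrableOn (s := {z | z.1 < z.2})).const_mul (2 * a)
  rw [prod_restrict_restrict_lt] at hdet_lt
  rw [vietaDomain, integrableOn_image_vietaMap (measurableSet_prod_inter_lt hs)
    prod_inter_lt_subset_le]
  exact IntegrableOn.congr_fun hdet_lt (fun z hz ↦
    (sub_smul_bezoutian_mul_bezoutian_mul_halfWeight w a f g f' g'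
      (prod_inter_lt_subset_le hz)).symm) (measurableSet_prod_inter_lt hs)

theorem integral_bezoutian_mul_bezoutian_mul_halfWeight (a : ℝ) (f g f' g' : ℝ[X]) :
    ∫ q in vietaDomain s, evalP (bezoutian f g) q * evalP (bezoutian f' g') q * halfWeight w a q
      = 2 * a * ((∫ x in s, f.eval x * f'.eval x * w x) * (∫ x in s, g.eval x * g'.eval x * w x)
        - (∫ x in s, f.eval x * g'.eval x * w x) * ∫ x in s, g.eval x * f'.eval x * w x) := by
  have hff' := integrableOn_eval_mul_eval_mul hw f f'
  have hfg' := integrableOn_eval_mul_eval_mul hw f g'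
  have hgf' := integrableOn_eval_mul_eval_mul hw g f'
  have hgg' := integrableOn_eval_mul_eval_mul hw g g'
  have hhalf := integral_prod_eq_two_smul_setIntegral_lt
    (integrable_det_mul_det hff' hfg' hgf' hgg') fun z ↦ by
      rw [Prod.fst_swap, Prod.snd_swap]
      ring
  rw [integral_det_mul_det hff' hfg' hgf' hgg', prod_restrict_restrict_lt, smul_eq_mul] at hhalf
  rw [vietaDomain, setIntegral_image_vietaMap (measurableSet_prod_inter_lt hs)
    prod_inter_lt_subset_le, setIntegral_congr_fun (measurableSet_prod_inter_lt hs) fun z hz ↦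
      sub_smul_bezoutian_mul_bezoutian_mul_halfWeight w a f g f' g' (prod_inter_lt_subset_le hz),
    integral_const_mul]
  simp only [mul_assoc (Polynomial.eval _ _)] at hhalf ⊢
  linear_combination -a * hhalf

theorem integrableOn_evalP_mul_halfWeight (a : ℝ) (P : MvPolynomial (Fin 2) ℝ) :
    IntegrableOn (fun q ↦ evalP P q * halfWeight w a q) (vietaDomain s) := by
  obtain ⟨N, hP⟩ : ∃ N, P ∈ Submodule.map₂ bezoutian (Polynomial.degreeLT ℝ (N + 2))
      (Polynomial.degreeLT ℝ (N + 2)) :=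
    ⟨P.totalDegree, by rw [map₂_bezoutian_degreeLT, mem_restrictTotalDegree]⟩
  rw [Submodule.map₂_eq_span_image2] at hP
  induction hP using Submodule.span_induction with
  | mem P hP =>
    obtain ⟨f, -, g, -, rfl⟩ := hP
    simpa [bezoutian_X_one, evalP] using
      integrableOn_bezoutian_mul_bezoutian_mul_halfWeight hs hw a f g Polynomial.X 1
  | zero => simp [evalP]
  | add P Q _ _ hP hQ => simpa only [IntegrableOn, evalP, map_add, add_mul] using hP.fun_add hQ
  | smul c P _ hP => simpa only [IntegrableOn, evalP, smul_eval, mul_assoc] using hP.const_mul c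

end HalfWeight

section Koornwinder

open MvPolynomial

/-- The polynomials `P_{k,n}` built from univariate polynomials `p`, written as Bézoutians;
the normalising constant `a` plays the role of `a_w^{1/2}`. -/
def koornwinder (a : ℝ) (p : ℕ → ℝ[X]) (k n : ℕ) : MvPolynomial (Fin 2) ℝ :=
  (√(2 * a))⁻¹ • bezoutian (p (n + 1)) (p k)

lemma evalP_koornwinder (a : ℝ) (p : ℕ → ℝ[X]) (k n : ℕ) {x y : ℝ} (hxy : x ≠ y) :
    evalP (koornwinder a p k n) (x + y, x * y) = (√(2 * a))⁻¹
      * (((p (n + 1)).eval x * (p k).eval y - (p (n + 1)).eval y * (p k).eval x) / (x - y)) := by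
  rw [koornwinder, evalP, smul_eval, ← eval_bezoutian_mul_sub,
    mul_div_cancel_right₀ _ (sub_ne_zero.2 hxy)]

variable {a : ℝ} (ha0 : 0 < a)

include ha0

open scoped Pointwise in
lemma span_koornwinder (S : Polynomial.Sequence ℝ) (N : ℕ) :
    Submodule.span ℝ ((fun i ↦ koornwinder a S i.1 i.2) '' indexTriangle N)
      = restrictTotalDegree (Fin 2) ℝ N := by
  have hunit : IsUnit (√(2 * a))⁻¹ := (inv_pos.2 (Real.sqrt_pos.2 (by positivity))).ne'.isUnit
  have hsmul : (fun i ↦ koornwinder a S i.1 i.2) '' indexTriangle N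
      = (√(2 * a))⁻¹ • ((fun i ↦ bezoutian (S (i.2 + 1)) (S i.1)) '' indexTriangle N) := by
    rw [← image_smul, image_image]
    rfl
  rw [hsmul, Submodule.span_smul_eq_of_isUnit _ _ hunit, span_bezoutian_sequence S
    fun i ↦ (Polynomial.leadingCoeff_ne_zero.2 (S.ne_zero i)).isUnit]

theorem integral_koornwinder_mul_koornwinder {s : Set ℝ} {w : ℝ → ℝ} (hs : MeasurableSet s)
    (hw : ∀ k : ℕ, IntegrableOn (fun x ↦ x ^ k * w x) s) {p : ℕ → ℝ[X]}
    (horth : ∀ n m, ∫ x in s, (p n).eval x * (p m).eval x * w x = if n = m then 1 else 0)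
    {n k m j : ℕ} (hk : k ≤ n) (hj : j ≤ m) :
    ∫ q in vietaDomain s, evalP (koornwinder a p k n) q * evalP (koornwinder a p j m) q
      * halfWeight w a q = if k = j ∧ n = m then 1 else 0 := by
  have hscale (q : ℝ × ℝ) :
      evalP (koornwinder a p k n) q * evalP (koornwinder a p j m) q * halfWeight w a q
        = (2 * a)⁻¹ * (evalP (bezoutian (p (n + 1)) (p k)) q
          * evalP (bezoutian (p (m + 1)) (p j)) q * halfWeight w a q) := by
    have hsqrt : (√(2 * a))⁻¹ * (√(2 * a))⁻¹ = (2 * a)⁻¹ := by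
      rw [← mul_inv, Real.mul_self_sqrt (by positivity)]
    simp only [koornwinder, evalP, smul_eval, ← hsqrt]
    ring
  have hoff : ¬(k = m + 1 ∧ n + 1 = j) := by omega
  rw [integral_congr_ae (.of_forall hscale), integral_const_mul,
    integral_bezoutian_mul_bezoutian_mul_halfWeight hs hw, inv_mul_cancel_left₀ (by positivity)]
  simp only [horth, ← ite_and, mul_ite, mul_one, mul_zero, add_left_inj]
  rw [if_neg hoff, sub_zero]

end Koornwinder

theorem stmt_3_general {s : Set ℝ} (hs : MeasurableSet s) (w : ℝ → ℝ)
    (hw : ∀ k : ℕ, IntegrableOn (fun x ↦ x ^ k * w x) s) (p : ℕ → ℝ[X])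
    (hdeg : ∀ n, (p n).natDegree = n)
    (horth : ∀ n m, ∫ x in s, (p n).eval x * (p m).eval x * w x = if n = m then 1 else 0)
    (a : ℝ) (ha0 : 0 < a) :
    ∃ P : ℕ → ℕ → MvPolynomial (Fin 2) ℝ,
      (∀ n k, k ≤ n → (P k n).totalDegree = n) ∧
      (∀ n k x y, x ≠ y → evalP (P k n) (x + y, x * y) = (√(2 * a))⁻¹
        * (((p (n + 1)).eval x * (p k).eval y - (p (n + 1)).eval y * (p k).eval x) / (x - y))) ∧
      (∀ n k m j, k ≤ n → j ≤ m →
        ∫ q in vietaDomain s, evalP (P k n) q * evalP (P j m) q * halfWeight w a q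
          = if k = j ∧ n = m then 1 else 0) ∧
      (∀ n, isONBVn (vietaDomain s) (halfWeight w a) n (fun k ↦ P k n)) ∧
      (∀ n k Q, (∀ x y, x ≠ y → evalP Q (x + y, x * y) = (√(2 * a))⁻¹
        * (((p (n + 1)).eval x * (p k).eval y - (p (n + 1)).eval y * (p k).eval x) / (x - y))) →
        Q = P k n) := by
  have hp_ne (n : ℕ) : p n ≠ 0 := fun h ↦ by simpa [h] using horth n n
  have hWint := integrableOn_evalP_mul_halfWeight hs hw a
  have hspan := span_koornwinder ha0
    ⟨p, fun n ↦ by rw [Polynomial.degree_eq_natDegree (hp_ne n), hdeg]⟩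
  have horthP : ∀ n k m j, k ≤ n → j ≤ m → _ := fun _ _ _ _ hk hj ↦
    integral_koornwinder_mul_koornwinder ha0 hs hw horth hk hj
  exact ⟨koornwinder a p, fun n k ↦ totalDegree_eq_of_orthonormal hWint hspan horthP,
    fun n k x y ↦ evalP_koornwinder a p k n, horthP, isONBVn_of_orthonormal hWint hspan horthP,
    fun n k Q hQ ↦ eq_of_eval_sum_prod_eq fun x y hxy ↦
      (hQ x y hxy).trans (evalP_koornwinder a p k n hxy).symm⟩

/-- the explicit orthonormal basis of `V_n(W_{1/2})` on `Ω` built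
from the orthonormal polynomials `p_n` of `w`. -/
theorem stmt_3
    (w : ℝ → ℝ) (hw0 : ∀ x, 0 ≤ w x)
    (hwi : IntegrableOn w (Icc (-1:ℝ) 1))
    (hw1 : (∫ x in Icc (-1:ℝ) 1, w x) = 1)
    (hwm : ∀ k : ℕ, IntegrableOn (fun x => x ^ k * w x) (Icc (-1:ℝ) 1))
    (p : ℕ → Polynomial ℝ) (hp : IsONPS w p)
    (a : ℝ) (ha0 : 0 < a)
    (ha : (∫ q in sqDom, a * w q.1 * w q.2 * (q.1 - q.2) ^ 2) = 1)
    (W : ℝ × ℝ → ℝ)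
    (hW : ∀ q : ℝ × ℝ, W q
      = 2 * a * w (xRoot q) * w (yRoot q) * (q.1 ^ 2 - 4 * q.2) ^ ((1:ℝ)/2)) :
    ∃ P : ℕ → ℕ → MvPolynomial (Fin 2) ℝ,
      (∀ n k, k ≤ n → (P k n).totalDegree = n) ∧
      (∀ n k, k ≤ n → ∀ x y : ℝ, x ≠ y →
        evalP (P k n) (x + y, x * y)
          = (Real.sqrt (2 * a))⁻¹
            * (((p (n+1)).eval x * (p k).eval y - (p (n+1)).eval y * (p k).eval x)
                / (x - y))) ∧
      (∀ n k m j, k ≤ n → j ≤ m →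
        (∫ q in omegaDom, evalP (P k n) q * evalP (P j m) q * W q)
          = if k = j ∧ n = m then 1 else 0) ∧
      (∀ n, isONBVn omegaDom W n (fun k => P k n)) ∧
      (∀ P' : ℕ → ℕ → MvPolynomial (Fin 2) ℝ,
        (∀ n k, k ≤ n → (P' k n).totalDegree = n) →
        (∀ n k, k ≤ n → ∀ x y : ℝ, x ≠ y →
          evalP (P' k n) (x + y, x * y)
            = (Real.sqrt (2 * a))⁻¹
              * (((p (n+1)).eval x * (p k).eval y - (p (n+1)).eval y * (p k).eval x)
                  / (x - y))) →
        ∀ n k, k ≤ n → P' k n = P k n) := by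
  obtain rfl : W = halfWeight w a := funext hW
  obtain ⟨P, hdeg, heval, horth, hbasis, hunique⟩ := stmt_3_general measurableSet_Ioo w
    (fun k ↦ (hwm k).mono_set Ioo_subset_Icc_self) p hp.1
    (fun n m ↦ integral_Icc_eq_integral_Ioo.symm.trans (hp.2.2 n m)) a ha0
  rw [vietaDomain_Ioo_eq_omegaDom] at horth hbasis
  exact ⟨P, hdeg, fun n k _ ↦ heval n k, horth, hbasis,
    fun P' _ heval' n k hk ↦ hunique n k (P' k n) (heval' n k hk)⟩
end
end

section
/- For every n ≥ 0 and all x₁, x₂, y₁, y₂ ∈ (−1,1), the reproducing kernel of Π_n² in L²(W_{−1/2}) satisfies K_n(W_{−1/2}; (x₁+x₂, x₁x₂), (y₁+y₂, y₁y₂)) = (1/2) [ k_n(w; x₁, y₁) k_n(w; x₂, y₂) + k_n(w; x₂, y₁) k_n(w; x₁, y₂) ]. -/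
open MeasureTheory Real Set Filter
open scoped ENNReal

noncomputable section

/-!
On symmetric polynomials, `L²(W_{-1/2})` on `Ω` is the restriction of `L²(w ⊗ w)` on the square
`[-1,1]²`: the Jacobian `|x - y|` of `(x, y) ↦ (x + y, x y)` cancels `(u² - 4v)^{-1/2}`, and by
symmetry the factor `2` turns the triangle `x < y` into the square. A polynomial of total degree at
most `n` in `x + y` and `x y` has degree at most `n` in each of `x` and `y`, so the product kernel
`k_n ⊗ k_n` reproduces it. Conversely, the symmetrization of `k_n(·, y₁) k_n(·, y₂)` is a polynomial
of total degree at most `n` in `x + y` and `x y`, hence it is the reproducing kernel.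
-/

section SymmetricPolynomials

open MvPolynomial

variable {R : Type*} [CommRing R]

/-- The substitution `(u, v) ↦ (x + y, x y)`, which pulls polynomials on `Ω` back to symmetric
polynomials on the square. -/
def vietaSub : MvPolynomial (Fin 2) R →ₐ[R] MvPolynomial (Fin 2) R :=
  bind₁ ![X 0 + X 1, X 0 * X 1]

theorem degreeOf_vietaSub_le (P : MvPolynomial (Fin 2) R) (i : Fin 2) :
    (vietaSub P).degreeOf i ≤ P.totalDegree := by
  rcases subsingleton_or_nontrivial R with _ | _
  · simp [Subsingleton.elim (vietaSub P) 0]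
  have degreeOf_add : (X 0 + X 1 : MvPolynomial (Fin 2) R).degreeOf i ≤ 1 :=
    (degreeOf_add_le _ _ _).trans (by fin_cases i <;> simp [degreeOf_X])
  have degreeOf_mul : (X 0 * X 1 : MvPolynomial (Fin 2) R).degreeOf i ≤ 1 :=
    (degreeOf_mul_le _ _ _).trans (by fin_cases i <;> simp [degreeOf_X])
  rw [vietaSub, bind₁, aeval_def, eval₂_eq']
  refine (degreeOf_sum_le _ _ _).trans (Finset.sup_le fun d hd ↦ ?_)
  have degree_le : d 0 + d 1 ≤ P.totalDegree := by
    simpa [Finsupp.sum_fintype] using le_totalDegree hd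
  refine (degreeOf_C_mul_le _ _ _).trans (le_trans ?_ degree_le)
  rw [Fin.prod_univ_two]
  refine (degreeOf_mul_le _ _ _).trans (add_le_add ?_ ?_)
  · exact (degreeOf_pow_le _ _ _).trans (by simpa using Nat.mul_le_mul_left (d 0) degreeOf_add)
  · exact (degreeOf_pow_le _ _ _).trans (by simpa using Nat.mul_le_mul_left (d 1) degreeOf_mul)

variable (R) in
/-- The polynomials in `x` and `y` that are polynomials of total degree at most `n` in `x + y` and
`x y`. -/
def vietaRange (n : ℕ) : Submodule R (MvPolynomial (Fin 2) R) :=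
  (restrictTotalDegree (Fin 2) R n).map vietaSub.toLinearMap

theorem mem_vietaRange {n : ℕ} {f : MvPolynomial (Fin 2) R} :
    f ∈ vietaRange R n ↔ ∃ P : MvPolynomial (Fin 2) R, P.totalDegree ≤ n ∧ vietaSub P = f := by
  simp [vietaRange, mem_restrictTotalDegree]

theorem vietaRange_mono : Monotone (vietaRange R) := fun _ _ h f hf ↦ by
  obtain ⟨P, hP, rfl⟩ := mem_vietaRange.1 hf
  exact mem_vietaRange.2 ⟨P, hP.trans h, rfl⟩

theorem mul_mem_vietaRange {m n : ℕ} {f g : MvPolynomial (Fin 2) R}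
    (hf : f ∈ vietaRange R m) (hg : g ∈ vietaRange R n) : f * g ∈ vietaRange R (m + n) := by
  obtain ⟨P, hP, rfl⟩ := mem_vietaRange.1 hf
  obtain ⟨Q, hQ, rfl⟩ := mem_vietaRange.1 hg
  exact mem_vietaRange.2 ⟨P * Q, (totalDegree_mul P Q).trans (add_le_add hP hQ), map_mul ..⟩

theorem C_mem_vietaRange (c : R) : C c ∈ vietaRange R 0 :=
  mem_vietaRange.2 ⟨C c, by simp, by simp [vietaSub]⟩

theorem X_add_X_mem_vietaRange : X 0 + X 1 ∈ vietaRange R 1 := by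
  nontriviality R
  exact mem_vietaRange.2 ⟨X 0, by simp, by simp [vietaSub]⟩

theorem X_mul_X_pow_mem_vietaRange (n : ℕ) : (X 0 * X 1) ^ n ∈ vietaRange R n := by
  nontriviality R
  exact mem_vietaRange.2 ⟨X 1 ^ n, by simp, by simp [vietaSub]⟩

theorem X_pow_add_X_pow_mem_vietaRange (n : ℕ) : X 0 ^ n + X 1 ^ n ∈ vietaRange R n := by
  induction n using Nat.twoStepInduction with
  | zero =>
    convert C_mem_vietaRange (2 : R) using 1
    simp only [pow_zero, one_add_one_eq_two, map_ofNat]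
  | one => simpa only [pow_one] using X_add_X_mem_vietaRange
  | more n ih₀ ih₁ =>
    have newton : (X 0 ^ (n + 2) + X 1 ^ (n + 2) : MvPolynomial (Fin 2) R) =
        (X 0 ^ (n + 1) + X 1 ^ (n + 1)) * (X 0 + X 1) - (X 0 ^ n + X 1 ^ n) * (X 0 * X 1) ^ 1 := by
      ring
    have h₀ := mul_mem_vietaRange ih₀ (X_mul_X_pow_mem_vietaRange 1)
    have h₁ := mul_mem_vietaRange ih₁ X_add_X_mem_vietaRange
    rw [newton]
    exact sub_mem h₁ (vietaRange_mono (Nat.le_succ _) h₀)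

theorem symmetrized_monomial_mem_vietaRange {n i j : ℕ} (hi : i ≤ n) (hj : j ≤ n) :
    X 0 ^ i * X 1 ^ j + X 1 ^ i * X 0 ^ j ∈ vietaRange R n := by
  wlog hij : i ≤ j generalizing i j
  · convert this hj hi (by lia) using 1
    ring
  obtain ⟨d, rfl⟩ := Nat.exists_eq_add_of_le hij
  convert vietaRange_mono hj (mul_mem_vietaRange (X_mul_X_pow_mem_vietaRange (R := R) i)
    (X_pow_add_X_pow_mem_vietaRange d)) using 1
  ring

theorem symmetrized_product_mem_vietaRange {n : ℕ} {a b : Polynomial R}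
    (ha : a.natDegree ≤ n) (hb : b.natDegree ≤ n) :
    Polynomial.aeval (X 0) a * Polynomial.aeval (X 1) b +
      Polynomial.aeval (X 1) a * Polynomial.aeval (X 0) b ∈ vietaRange R n := by
  simp only [Polynomial.aeval_eq_sum_range' (Nat.lt_succ_of_le ha),
    Polynomial.aeval_eq_sum_range' (Nat.lt_succ_of_le hb), Finset.sum_mul_sum,
    ← Finset.sum_add_distrib, smul_mul_smul_comm, ← smul_add]
  exact sum_mem fun i hi ↦ sum_mem fun j hj ↦ Submodule.smul_mem _ _ <|
    symmetrized_monomial_mem_vietaRange (Finset.mem_range_succ_iff.1 hi)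
      (Finset.mem_range_succ_iff.1 hj)

end SymmetricPolynomials

section Evaluation

theorem evalP_vietaSub (P : MvPolynomial (Fin 2) ℝ) (z : ℝ × ℝ) :
    evalP (vietaSub P) z = evalP P (z.1 + z.2, z.1 * z.2) := by
  refine (MvPolynomial.eval₂Hom_bind₁ (.id ℝ) _ _ P).trans (MvPolynomial.eval₂Hom_congr rfl ?_ rfl)
  ext i
  fin_cases i <;> simp

theorem eval_polynomial_aeval_X {σ R : Type*} [CommSemiring R] (v : σ → R) (i : σ)
    (a : Polynomial R) : MvPolynomial.eval v (Polynomial.aeval (.X i) a) = a.eval (v i) := by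
  simpa using (Polynomial.aeval_algHom_apply (MvPolynomial.aeval v) (.X i) a).symm

theorem continuous_evalP (P : MvPolynomial (Fin 2) ℝ) : Continuous (evalP P) :=
  (MvPolynomial.continuous_eval P).comp <| by fun_prop

theorem evalP_vieta_eq_of_eqOn_omegaDom {P Q : MvPolynomial (Fin 2) ℝ}
    (h : EqOn (evalP P) (evalP Q) omegaDom) (s t : ℝ) :
    evalP P (s + t, s * t) = evalP Q (s + t, s * t) := by
  suffices vietaSub P = vietaSub Q by
    rw [← evalP_vietaSub P (s, t), this, evalP_vietaSub Q (s, t)]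
  -- The box `(-1, 0) × (0, 1)` lies in the triangle `-1 < x < y < 1`.
  refine MvPolynomial.funext_set ![Ioo (-1) 0, Ioo 0 1] (fun i ↦ ?_) fun z hz ↦ ?_
  · fin_cases i
    · exact Ioo_infinite (by norm_num)
    · exact Ioo_infinite (by norm_num)
  · have h₀ : z 0 ∈ Ioo (-1 : ℝ) 0 := hz 0 (mem_univ _)
    have h₁ : z 1 ∈ Ioo (0 : ℝ) 1 := hz 1 (mem_univ _)
    have eq := h ⟨z 0, z 1, h₀.1, h₀.2.trans h₁.1, h₁.2, rfl⟩
    rw [← evalP_vietaSub P (z 0, z 1), ← evalP_vietaSub Q (z 0, z 1)] at eq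
    have cons_eq : ![z 0, z 1] = z := by
      ext i
      fin_cases i <;> rfl
    simpa only [evalP, cons_eq] using eq

end Evaluation

section ReproducingKernel

variable {D : Set (ℝ × ℝ)} {W : ℝ × ℝ → ℝ} {n : ℕ} {K : ℝ × ℝ → ℝ × ℝ → ℝ}

theorem IsRK.exists_evalP_left (hK : IsRK D W n K) (y : ℝ × ℝ) :
    ∃ P : MvPolynomial (Fin 2) ℝ, ∀ x, K x y = evalP P x := by
  obtain ⟨⟨KP, hKP⟩, -, -⟩ := hK
  refine ⟨MvPolynomial.bind₁ ![.X 0, .X 1, .C y.1, .C y.2] KP, fun x ↦ ?_⟩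
  refine (hKP x y).trans (.trans ?_ (MvPolynomial.eval₂Hom_bind₁ (.id ℝ) _ _ KP).symm)
  congr! 2
  ext i
  fin_cases i <;> simp

theorem IsRK.eq_evalP_of_reproducing (hK : IsRK D W n K) {Q : MvPolynomial (Fin 2) ℝ}
    (hQ : Q.totalDegree ≤ n) {x y : ℝ × ℝ} (hx : x ∈ D)
    (hrep : ∀ P : MvPolynomial (Fin 2) ℝ, P.totalDegree ≤ n →
      ∫ q in D, evalP P q * evalP Q q * W q = evalP P y) :
    K x y = evalP Q x := by
  obtain ⟨P, hP, hKP⟩ := hK.2.1 x hx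
  rw [hKP, ← hrep P hP, ← hK.2.2 Q hQ x hx]
  simp only [hKP]

end ReproducingKernel

section ChristoffelDarboux

variable {w : ℝ → ℝ} {p : ℕ → Polynomial ℝ}

/-- The Christoffel–Darboux kernel `k_n(·, y)` as a polynomial in its first variable. -/
def cdkPoly (p : ℕ → Polynomial ℝ) (n : ℕ) (y : ℝ) : Polynomial ℝ :=
  ∑ j ∈ Finset.range (n + 1), Polynomial.C ((p j).eval y) * p j

theorem eval_cdkPoly (n : ℕ) (x y : ℝ) : (cdkPoly p n y).eval x = CDK p n x y := by
  simp [cdkPoly, CDK, Polynomial.eval_finsetSum, mul_comm]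

theorem continuous_CDK (n : ℕ) (y : ℝ) : Continuous fun x ↦ CDK p n x y := by
  simpa only [eval_cdkPoly] using (cdkPoly p n y).continuous

theorem natDegree_cdkPoly_le (hp : ∀ j, (p j).natDegree ≤ j) (n : ℕ) (y : ℝ) :
    (cdkPoly p n y).natDegree ≤ n :=
  Polynomial.natDegree_sum_le_of_forall_le _ _ fun j hj ↦
    (Polynomial.natDegree_C_mul_le _ _).trans ((hp j).trans (Finset.mem_range_succ_iff.1 hj))

theorem exists_evalP_eq_symmetrized_CDK (hp : ∀ j, (p j).natDegree ≤ j) (n : ℕ) (y₁ y₂ : ℝ) :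
    ∃ Q : MvPolynomial (Fin 2) ℝ, Q.totalDegree ≤ n ∧ ∀ s t, evalP Q (s + t, s * t) =
      (1 / 2) * (CDK p n s y₁ * CDK p n t y₂ + CDK p n t y₁ * CDK p n s y₂) := by
  obtain ⟨Q, hQ, hQe⟩ := mem_vietaRange.1 <| Submodule.smul_mem _ (1 / 2 : ℝ) <|
    symmetrized_product_mem_vietaRange (natDegree_cdkPoly_le hp n y₁) (natDegree_cdkPoly_le hp n y₂)
  refine ⟨Q, hQ, fun s t ↦ ?_⟩
  rw [← evalP_vietaSub Q (s, t), hQe, ← eval_cdkPoly n s y₁, ← eval_cdkPoly n t y₂,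
    ← eval_cdkPoly n t y₁, ← eval_cdkPoly n s y₂]
  simp only [evalP, map_mul, map_add, MvPolynomial.smul_eval, eval_polynomial_aeval_X,
    Matrix.cons_val]

/-- The orthonormal polynomials, bundled as a sequence having one polynomial of each degree. -/
def IsONPS.toSequence (hp : IsONPS w p) : Polynomial.Sequence ℝ where
  elems' := p
  degree_eq' i := by
    rw [Polynomial.degree_eq_natDegree (Polynomial.leadingCoeff_ne_zero.1 (hp.2.1 i).ne'), hp.1 i]

theorem IsONPS.mem_span_of_natDegree_le (hp : IsONPS w p) {n : ℕ} {a : Polynomial ℝ}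
    (ha : a.natDegree ≤ n) : a ∈ Submodule.span ℝ (p '' Iic n) := by
  have span_eq := hp.toSequence.span_degreeLE (m := n) fun i _ ↦ (hp.2.1 i).ne'.isUnit
  exact span_eq ▸ Polynomial.mem_degreeLE.2 (Polynomial.natDegree_le_iff_degree_le.1 ha)

/- `p 0` is a constant with `∫ (p 0)² w = 1`, and a function with a nonzero Bochner integral is
integrable. -/
theorem IsONPS.integrableOn (hp : IsONPS w p) : IntegrableOn w (Icc (-1) 1) := by
  have integral_ne_zero : ∫ x in Icc (-1 : ℝ) 1, (p 0).eval x * (p 0).eval x * w x ≠ 0 := by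
    simp [hp.2.2]
  rw [Polynomial.eq_C_of_natDegree_eq_zero (hp.1 0)] at integral_ne_zero
  simp only [Polynomial.eval_C] at integral_ne_zero
  have hc : (p 0).coeff 0 * (p 0).coeff 0 ≠ 0 := fun h ↦ by simp [h] at integral_ne_zero
  exact (integrable_const_mul_iff hc.isUnit w).1 (.of_integral_ne_zero integral_ne_zero)

theorem IsONPS.integrableOn_mul (hp : IsONPS w p) {f : ℝ → ℝ} (hf : Continuous f) :
    IntegrableOn (fun x ↦ f x * w x) (Icc (-1) 1) :=
  hp.integrableOn.continuousOn_mul hf.continuousOn isCompact_Icc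

theorem IsONPS.integrableOn_mul_mul_prod (hp : IsONPS w p) {f : ℝ × ℝ → ℝ} (hf : Continuous f) :
    IntegrableOn (fun z ↦ f z * (w z.1 * w z.2)) sqDom := by
  have h : IntegrableOn (fun z : ℝ × ℝ ↦ w z.1 * w z.2) sqDom := by
    rw [sqDom, IntegrableOn, Measure.volume_eq_prod, ← Measure.prod_restrict]
    exact hp.integrableOn.mul_prod hp.integrableOn
  exact h.continuousOn_mul hf.continuousOn (isCompact_Icc.prod isCompact_Icc)

theorem IsONPS.integral_mul_CDK_of_le (hp : IsONPS w p) {n j : ℕ} (hj : j ≤ n) (y : ℝ) :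
    ∫ x in Icc (-1 : ℝ) 1, (p j).eval x * CDK p n x y * w x = (p j).eval y := by
  calc ∫ x in Icc (-1 : ℝ) 1, (p j).eval x * CDK p n x y * w x
      = ∫ x in Icc (-1 : ℝ) 1, ∑ i ∈ Finset.range (n + 1),
          (p i).eval y * ((p j).eval x * (p i).eval x * w x) := by
        simp only [CDK, Finset.mul_sum, Finset.sum_mul]
        congr! 3
        ring
    _ = ∑ i ∈ Finset.range (n + 1), (p i).eval y * if j = i then 1 else 0 := by
        rw [integral_finsetSum]
        · simp only [integral_const_mul, hp.2.2]
        · exact fun i _ ↦ (hp.integrableOn_mul (by fun_prop)).const_mul _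
    _ = (p j).eval y := by simp [Nat.lt_succ_of_le hj]

theorem IsONPS.integral_mul_CDK (hp : IsONPS w p) {n : ℕ} {a : Polynomial ℝ}
    (ha : a.natDegree ≤ n) (y : ℝ) :
    ∫ x in Icc (-1 : ℝ) 1, a.eval x * CDK p n x y * w x = a.eval y := by
  have integrable (b : Polynomial ℝ) :
      IntegrableOn (fun x ↦ b.eval x * CDK p n x y * w x) (Icc (-1) 1) :=
    hp.integrableOn_mul (b.continuous.mul (continuous_CDK n y))
  have mem_span := hp.mem_span_of_natDegree_le ha
  clear ha
  induction mem_span using Submodule.span_induction with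
  | mem b hb =>
    obtain ⟨j, hj, rfl⟩ := hb
    exact hp.integral_mul_CDK_of_le hj y
  | zero => simp
  | add b c _ _ hb hc =>
    simp only [Polynomial.eval_add, add_mul]
    rw [integral_add (integrable b) (integrable c), hb, hc]
  | smul r b _ hb =>
    simp only [Polynomial.eval_smul, smul_eq_mul, mul_assoc] at hb ⊢
    rw [integral_const_mul, hb]

theorem IsONPS.integral_sqDom_mul_CDK (hp : IsONPS w p) {n : ℕ} {P : MvPolynomial (Fin 2) ℝ}
    (hP : ∀ i, P.degreeOf i ≤ n) (y₁ y₂ : ℝ) :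
    ∫ z in sqDom, evalP P z * (CDK p n z.1 y₁ * CDK p n z.2 y₂) * (w z.1 * w z.2) =
      evalP P (y₁, y₂) := by
  let g (y : ℝ) (k : ℕ) (x : ℝ) : ℝ := x ^ k * CDK p n x y * w x
  have integrable_g (y : ℝ) (k : ℕ) : IntegrableOn (g y k) (Icc (-1) 1) :=
    hp.integrableOn_mul ((continuous_pow k).mul (continuous_CDK n y))
  have integral_g (y : ℝ) {k : ℕ} (hk : k ≤ n) : ∫ x in Icc (-1 : ℝ) 1, g y k x = y ^ k := by
    simpa [g] using hp.integral_mul_CDK ((Polynomial.natDegree_X_pow_le k).trans hk) y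
  calc ∫ z in sqDom, evalP P z * (CDK p n z.1 y₁ * CDK p n z.2 y₂) * (w z.1 * w z.2)
      = ∫ z in sqDom, ∑ d ∈ P.support, P.coeff d * (g y₁ (d 0) z.1 * g y₂ (d 1) z.2) := by
        simp only [evalP, MvPolynomial.eval_eq', Fin.prod_univ_two, Finset.sum_mul, g]
        congr! 3
        simp only [Matrix.cons_val]
        ring
    _ = ∑ d ∈ P.support, P.coeff d * (y₁ ^ d 0 * y₂ ^ d 1) := by
        rw [sqDom, Measure.volume_eq_prod, integral_finsetSum]
        · refine Finset.sum_congr rfl fun d hd ↦ ?_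
          have degree_le (i : Fin 2) : d i ≤ n :=
            (MvPolynomial.degreeOf_le_iff.1 (hP i)) d hd
          rw [integral_const_mul, setIntegral_prod_mul, integral_g y₁ (degree_le 0),
            integral_g y₂ (degree_le 1)]
        · intro d _
          rw [← Measure.prod_restrict]
          exact ((integrable_g y₁ (d 0)).mul_prod (integrable_g y₂ (d 1))).const_mul _
    _ = evalP P (y₁, y₂) := by simp [evalP, MvPolynomial.eval_eq', Fin.prod_univ_two]

end ChristoffelDarboux

section ChangeOfVariables

variable {E : Type*} [NormedAddCommGroup E] [NormedSpace ℝ E]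

theorem integral_prod_self_eq_two_smul_of_swap {α : Type*} [LinearOrder α] [TopologicalSpace α]
    [OrderClosedTopology α] [SecondCountableTopology α] [MeasurableSpace α]
    [OpensMeasurableSpace α] {μ : Measure α} [SFinite μ] [NullSingletonClass μ] {F : α × α → E}
    (hF : Integrable F (μ.prod μ)) (hswap : ∀ z, F z.swap = F z) :
    ∫ z, F z ∂μ.prod μ = (2 : ℝ) • ∫ z in {z | z.1 < z.2}, F z ∂μ.prod μ := by
  have measurableSet_lt : MeasurableSet {z : α × α | z.1 < z.2} :=
    measurableSet_lt measurable_fst measurable_snd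
  have ae_ne : ∀ᵐ z ∂μ.prod μ, z.1 ≠ z.2 := by
    have measurableSet_ne : MeasurableSet {z : α × α | z.1 ≠ z.2} :=
      (measurableSet_eq_fun measurable_fst measurable_snd).compl
    rw [Measure.ae_prod_iff_ae_ae measurableSet_ne]
    exact .of_forall fun a ↦ (μ.ae_ne a).mono fun _ ↦ Ne.symm
  have compl_ae_eq :
      ({z | z.1 < z.2}ᶜ : Set (α × α)) =ᵐ[μ.prod μ] Prod.swap ⁻¹' {z | z.1 < z.2} := by
    filter_upwards [ae_ne] with z hz
    exact propext ⟨fun h ↦ (not_lt.1 h).lt_of_ne' hz, fun h ↦ not_lt.2 (le_of_lt h)⟩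
  have integral_swap : ∫ z in Prod.swap ⁻¹' {z : α × α | z.1 < z.2}, F z ∂μ.prod μ =
      ∫ z in {z | z.1 < z.2}, F z ∂μ.prod μ := by
    simpa only [hswap] using
      (Measure.measurePreserving_swap (μ := μ) (ν := μ)).setIntegral_preimage_emb
        MeasurableEquiv.prodComm.measurableEmbedding F {z | z.1 < z.2}
  rw [← integral_add_compl measurableSet_lt hF, setIntegral_congr_set compl_ae_eq, integral_swap,
    two_smul]

theorem integral_sqDom_eq_two_smul_of_swap {F : ℝ × ℝ → E} (hF : IntegrableOn F sqDom)
    (hswap : ∀ z, F z.swap = F z) :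
    ∫ z in sqDom, F z = (2 : ℝ) • ∫ z in triDom, F z := by
  have triDom_eq : triDom = {z | z.1 < z.2} ∩ Ioo (-1) 1 ×ˢ Ioo (-1) 1 := by
    ext z
    simp only [triDom, mem_ofPred_eq, mem_inter_iff, mem_prod, mem_Ioo]
    grind
  have restrict_sqDom : volume.restrict sqDom =
      (volume.restrict (Ioo (-1 : ℝ) 1)).prod (volume.restrict (Ioo (-1 : ℝ) 1)) := by
    rw [sqDom, restrict_Ioo_eq_restrict_Icc, Measure.prod_restrict, Measure.volume_eq_prod]
  rw [IntegrableOn, restrict_sqDom] at hF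
  rw [restrict_sqDom, integral_prod_self_eq_two_smul_of_swap hF hswap, triDom_eq,
    Measure.prod_restrict,
    Measure.restrict_restrict (measurableSet_lt measurable_fst measurable_snd),
    Measure.volume_eq_prod]

theorem isOpen_triDom : IsOpen triDom :=
  (isOpen_lt continuous_const continuous_fst).inter <|
    (isOpen_lt continuous_fst continuous_snd).inter (isOpen_lt continuous_snd continuous_const)

theorem image_vieta_triDom : (fun z : ℝ × ℝ ↦ (z.1 + z.2, z.1 * z.2)) '' triDom = omegaDom := by
  ext q
  simp [triDom, omegaDom, eq_comm, and_assoc]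

theorem xRoot_add_mul {x y : ℝ} (h : x ≤ y) : xRoot (x + y, x * y) = x := by
  rw [xRoot, show (x + y) ^ 2 - 4 * (x * y) = (y - x) ^ 2 by ring, Real.sqrt_sq (sub_nonneg.2 h)]
  ring

theorem yRoot_add_mul {x y : ℝ} (h : x ≤ y) : yRoot (x + y, x * y) = y := by
  rw [yRoot, show (x + y) ^ 2 - 4 * (x * y) = (y - x) ^ 2 by ring, Real.sqrt_sq (sub_nonneg.2 h)]
  ring

theorem injOn_vieta_triDom : InjOn (fun z : ℝ × ℝ ↦ (z.1 + z.2, z.1 * z.2)) triDom :=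
  LeftInvOn.injOn (f₁' := fun q ↦ (xRoot q, yRoot q)) fun _ hz ↦
    Prod.ext (xRoot_add_mul hz.2.1.le) (yRoot_add_mul hz.2.1.le)

theorem hasFDerivAt_vieta (z : ℝ × ℝ) :
    HasFDerivAt (fun z : ℝ × ℝ ↦ (z.1 + z.2, z.1 * z.2))
      (Matrix.toLin (.finTwoProd ℝ) (.finTwoProd ℝ) !![1, 1; z.2, z.1]).toContinuousLinearMap
      z := by
  rw [Matrix.toLin_finTwoProd_toContinuousLinearMap]
  have fst : HasFDerivAt Prod.fst (.fst ℝ ℝ ℝ) z := hasFDerivAt_fst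
  have snd : HasFDerivAt Prod.snd (.snd ℝ ℝ ℝ) z := hasFDerivAt_snd
  convert! (fst.add snd).prodMk (fst.mul snd) using 2 <;> simp [add_comm]

theorem integral_omegaDom (F : ℝ × ℝ → E) :
    ∫ q in omegaDom, F q = ∫ z in triDom, |z.1 - z.2| • F (z.1 + z.2, z.1 * z.2) := by
  rw [← image_vieta_triDom, integral_image_eq_integral_abs_det_fderiv_smul volume
    isOpen_triDom.measurableSet (fun z _ ↦ (hasFDerivAt_vieta z).hasFDerivWithinAt)
    injOn_vieta_triDom]
  simp [Matrix.det_fin_two_of]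

/-- The weight `W_{-1/2}` on `Ω` associated with the weight `w` on `[-1,1]`. -/
def negHalfWeight (w : ℝ → ℝ) (q : ℝ × ℝ) : ℝ :=
  2 * w (xRoot q) * w (yRoot q) * (q.1 ^ 2 - 4 * q.2) ^ (-(1 / 2) : ℝ)

theorem abs_sub_mul_negHalfWeight_vieta (w : ℝ → ℝ) {z : ℝ × ℝ} (hz : z ∈ triDom) :
    |z.1 - z.2| * negHalfWeight w (z.1 + z.2, z.1 * z.2) = 2 * (w z.1 * w z.2) := by
  have hlt : z.1 < z.2 := hz.2.1
  have disc_rpow : ((z.1 + z.2) ^ 2 - 4 * (z.1 * z.2)) ^ (-(1 / 2) : ℝ) = |z.1 - z.2|⁻¹ := by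
    rw [show (z.1 + z.2) ^ 2 - 4 * (z.1 * z.2) = (z.1 - z.2) ^ 2 by ring,
      Real.rpow_neg (sq_nonneg _), ← Real.sqrt_eq_rpow, Real.sqrt_sq_eq_abs]
  rw [negHalfWeight, xRoot_add_mul hlt.le, yRoot_add_mul hlt.le, disc_rpow]
  field_simp [abs_ne_zero.2 (sub_ne_zero.2 hlt.ne)]

theorem integral_omegaDom_mul_negHalfWeight {w : ℝ → ℝ} {H : ℝ × ℝ → ℝ}
    (hH : IntegrableOn (fun z ↦ H (z.1 + z.2, z.1 * z.2) * (w z.1 * w z.2)) sqDom) :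
    ∫ q in omegaDom, H q * negHalfWeight w q =
      ∫ z in sqDom, H (z.1 + z.2, z.1 * z.2) * (w z.1 * w z.2) := by
  have hswap (z : ℝ × ℝ) : H (z.swap.1 + z.swap.2, z.swap.1 * z.swap.2) *
      (w z.swap.1 * w z.swap.2) = H (z.1 + z.2, z.1 * z.2) * (w z.1 * w z.2) := by
    simp only [Prod.fst_swap, Prod.snd_swap, add_comm z.2, mul_comm z.2, mul_comm (w z.2)]
  rw [integral_omegaDom, integral_sqDom_eq_two_smul_of_swap hH hswap, ← integral_smul]
  refine setIntegral_congr_fun isOpen_triDom.measurableSet fun z hz ↦ ?_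
  linear_combination H (z.1 + z.2, z.1 * z.2) * abs_sub_mul_negHalfWeight_vieta w hz

end ChangeOfVariables

theorem IsONPS.integral_omegaDom_mul_symmetrized_CDK {w : ℝ → ℝ}
    {p : ℕ → Polynomial ℝ} (hp : IsONPS w p) {n : ℕ}
    {P Q : MvPolynomial (Fin 2) ℝ} (hP : P.totalDegree ≤ n) {y₁ y₂ : ℝ}
    (hQ : ∀ s t, evalP Q (s + t, s * t) =
      (1 / 2) * (CDK p n s y₁ * CDK p n t y₂ + CDK p n t y₁ * CDK p n s y₂)) :
    ∫ q in omegaDom, evalP P q * evalP Q q * negHalfWeight w q = evalP P (y₁ + y₂, y₁ * y₂) := by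
  let f (a b : ℝ) (z : ℝ × ℝ) : ℝ :=
    evalP (vietaSub P) z * (CDK p n z.1 a * CDK p n z.2 b) * (w z.1 * w z.2)
  have integrable_f (a b : ℝ) : IntegrableOn (f a b) sqDom :=
    hp.integrableOn_mul_mul_prod <| (continuous_evalP _).mul <|
      ((continuous_CDK n a).comp continuous_fst).mul ((continuous_CDK n b).comp continuous_snd)
  have integral_f (a b : ℝ) : ∫ z in sqDom, f a b z = evalP P (a + b, a * b) := by
    rw [← evalP_vietaSub P (a, b)]
    exact hp.integral_sqDom_mul_CDK (fun i ↦ (degreeOf_vietaSub_le P i).trans hP) a b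
  have symmetrize (z : ℝ × ℝ) : evalP P (z.1 + z.2, z.1 * z.2) *
      evalP Q (z.1 + z.2, z.1 * z.2) * (w z.1 * w z.2) = (1 / 2) * (f y₁ y₂ z + f y₂ y₁ z) := by
    simp only [hQ, f, evalP_vietaSub]
    ring
  have continuous_vieta : Continuous fun z : ℝ × ℝ ↦ (z.1 + z.2, z.1 * z.2) := by fun_prop
  have integrable_PQ := hp.integrableOn_mul_mul_prod <|
    ((continuous_evalP P).comp continuous_vieta).mul ((continuous_evalP Q).comp continuous_vieta)
  rw [integral_omegaDom_mul_negHalfWeight integrable_PQ]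
  simp only [symmetrize]
  rw [integral_const_mul, integral_add (integrable_f y₁ y₂) (integrable_f y₂ y₁), integral_f,
    integral_f, add_comm y₂, mul_comm y₂]
  ring

theorem stmt_4_general {w : ℝ → ℝ} {p : ℕ → Polynomial ℝ} (hp : IsONPS w p) {n : ℕ}
    {K : ℝ × ℝ → ℝ × ℝ → ℝ} (hK : IsRK omegaDom (negHalfWeight w) n K) (x₁ x₂ y₁ y₂ : ℝ) :
    K (x₁ + x₂, x₁ * x₂) (y₁ + y₂, y₁ * y₂) =
      (1 / 2) * (CDK p n x₁ y₁ * CDK p n x₂ y₂ + CDK p n x₂ y₁ * CDK p n x₁ y₂) := by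
  obtain ⟨Q, hQ, hQe⟩ := exists_evalP_eq_symmetrized_CDK (fun j ↦ (hp.1 j).le) n y₁ y₂
  obtain ⟨P, hKP⟩ := hK.exists_evalP_left (y₁ + y₂, y₁ * y₂)
  have eqOn : EqOn (evalP P) (evalP Q) omegaDom := fun x hx ↦ by
    rw [← hKP]
    exact hK.eq_evalP_of_reproducing hQ hx fun R hR ↦
      hp.integral_omegaDom_mul_symmetrized_CDK hR hQe
  rw [hKP, evalP_vieta_eq_of_eqOn_omegaDom eqOn, hQe]

/-- closed formula for the reproducing kernel of `Π_n²` in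
`L²(W_{-1/2})` in terms of Christoffel–Darboux kernels. -/
theorem stmt_4
    (w : ℝ → ℝ) (hw0 : ∀ x, 0 ≤ w x)
    (hwi : IntegrableOn w (Icc (-1:ℝ) 1))
    (hw1 : (∫ x in Icc (-1:ℝ) 1, w x) = 1)
    (hwm : ∀ k : ℕ, IntegrableOn (fun x => x ^ k * w x) (Icc (-1:ℝ) 1))
    (p : ℕ → Polynomial ℝ) (hp : IsONPS w p)
    (W : ℝ × ℝ → ℝ)
    (hW : ∀ q : ℝ × ℝ, W q
      = 2 * w (xRoot q) * w (yRoot q) * (q.1 ^ 2 - 4 * q.2) ^ (-(1/2) : ℝ))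
    (K : ℕ → (ℝ × ℝ) → (ℝ × ℝ) → ℝ)
    (hK : ∀ n, IsRK omegaDom W n (K n)) :
    ∀ n : ℕ, ∀ x₁ x₂ y₁ y₂ : ℝ,
      x₁ ∈ Ioo (-1:ℝ) 1 → x₂ ∈ Ioo (-1:ℝ) 1 → y₁ ∈ Ioo (-1:ℝ) 1 → y₂ ∈ Ioo (-1:ℝ) 1 →
      K n (x₁ + x₂, x₁ * x₂) (y₁ + y₂, y₁ * y₂)
        = (1/2) * (CDK p n x₁ y₁ * CDK p n x₂ y₂ + CDK p n x₂ y₁ * CDK p n x₁ y₂) := by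
  obtain rfl : W = negHalfWeight w := funext hW
  intro n x₁ x₂ y₁ y₂ _ _ _ _
  exact stmt_4_general hp (hK n) x₁ x₂ y₁ y₂
end
end
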